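/- The Hilbert cube cannot be separated by a weakly infinite dimensional subset: if S ⊆ Q is weakly infinite dimensional, then Q \ S is a connected subspace of Q. -/

import Mathlib

open Set

/-- A separator between `A` and `B` in a topological space: a closed set `L` whose
complement is the union of two disjoint open sets containing `A` and `B` respectively. -/
def IsSeparator {X : Type*} [TopologicalSpace X] (A B L : Set X) : Prop :=
  IsClosed L ∧ ∃ U V : Set X, IsOpen U ∧ IsOpen V ∧ Disjoint U V ∧
    A ⊆ U ∧ B ⊆ V ∧ Lᶜ = U ∪ V

/-- A family of pairs of sets is essential if every choice of separators has
nonempty intersection. -/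
def IsEssentialFamily {X : Type*} [TopologicalSpace X] {Γ : Type*}
    (A B : Γ → Set X) : Prop :=
  ∀ L : Γ → Set X, (∀ i, IsSeparator (A i) (B i) (L i)) → (⋂ i, L i).Nonempty

/-- A space is strongly infinite dimensional if it admits a countably infinite
essential family of pairs of disjoint closed subsets. -/
def StronglyInfiniteDimensional (X : Type*) [TopologicalSpace X] : Prop :=
  ∃ A B : ℕ → Set X,
    (∀ n, IsClosed (A n) ∧ IsClosed (B n) ∧ Disjoint (A n) (B n)) ∧
    IsEssentialFamily A B

/-- The Hilbert cube `Q = [-1,1]^ℕ`. -/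
abbrev HilbertCube : Type := ℕ → Set.Icc (-1 : ℝ) 1

/-- The negative face `W_i^- = {x ∈ Q : x_i = -1}`. -/
def negFace (i : ℕ) : Set HilbertCube := {x | (x i : ℝ) = -1}

/-- The positive face `W_i^+ = {x ∈ Q : x_i = 1}`. -/
def posFace (i : ℕ) : Set HilbertCube := {x | (x i : ℝ) = 1}


section Comb
variable {ι : Type*} [DecidableEq ι]

/-- cubical coboundary mod 2 -/
def cobd (ω : (ι → ℤ) → Finset ι → ZMod 2) (x : ι → ℤ) (J : Finset ι) : ZMod 2 :=
  ∑ j ∈ J, (ω (x + Pi.single j 1) (J.erase j) + ω x (J.erase j))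

/-- left cup multiplication by the coboundary of `f` -/
def cupD (f : (ι → ℤ) → ZMod 2) (ω : (ι → ℤ) → Finset ι → ZMod 2)
    (x : ι → ℤ) (J : Finset ι) : ZMod 2 :=
  ∑ j ∈ J, (f (x + Pi.single j 1) + f x) * ω (x + Pi.single j 1) (J.erase j)

/-- iterated cup product -/
def cupW (a : ι → (ι → ℤ) → ZMod 2) : List ι → (ι → ℤ) → Finset ι → ZMod 2
  | [] => fun _ J => if J = ∅ then 1 else 0
  | i :: l => cupD (a i) (cupW a l)

lemma zmod2_add_self (a : ZMod 2) : a + a = 0 := CharTwo.add_self_eq_zero a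

lemma sum_symm_zero (J : Finset ι) (g : ι → ι → ZMod 2) (hg : ∀ j k, g j k = g k j) :
    ∑ j ∈ J, ∑ k ∈ J.erase j, g j k = 0 := by
  rw [Finset.sum_sigma']
  refine Finset.sum_involution (fun p _ => ⟨p.2, p.1⟩) ?_ ?_ ?_ ?_
  · rintro ⟨j, k⟩ _
    simp only [hg k j]
    exact zmod2_add_self _
  · rintro ⟨j, k⟩ h _ h2
    simp only [Finset.mem_sigma, Finset.mem_erase] at h
    simp only [Sigma.mk.injEq] at h2
    exact h.2.1 h2.1
  · rintro ⟨j, k⟩ h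
    simp only [Finset.mem_sigma, Finset.mem_erase] at h ⊢
    exact ⟨h.2.2, fun e => h.2.1 e.symm, h.1⟩
  · rintro ⟨j, k⟩ h
    rfl

lemma cobd_cobd (ω : (ι → ℤ) → Finset ι → ZMod 2) (x : ι → ℤ) (J : Finset ι) :
    cobd (cobd ω) x J = 0 := by
  unfold cobd
  simp only [← Finset.sum_add_distrib]
  apply sum_symm_zero J (fun j k => _)
  intro j k
  rw [Finset.erase_right_comm, add_right_comm x]
  ring

lemma cobd_mul (f : (ι → ℤ) → ZMod 2) (ω : (ι → ℤ) → Finset ι → ZMod 2)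
    (x : ι → ℤ) (J : Finset ι) :
    cobd (fun x J => f x * ω x J) x J = cupD f ω x J + f x * cobd ω x J := by
  unfold cobd cupD
  rw [Finset.mul_sum, ← Finset.sum_add_distrib]
  refine Finset.sum_congr rfl fun j _ => ?_
  have h := zmod2_add_self (f x * ω (x + Pi.single j 1) (J.erase j))
  linear_combination -h

lemma cobd_cupW (a : ι → (ι → ℤ) → ZMod 2) (l : List ι) (x : ι → ℤ) (J : Finset ι) :
    cobd (cupW a l) x J = 0 := by
  induction l generalizing x J with
  | nil => 
    unfold cobd cupW
    exact Finset.sum_eq_zero fun j _ => zmod2_add_self _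
  | cons i l ih =>
    have : cupW a (i :: l) = cobd (fun x J => a i x * cupW a l x J) := by
      funext x J
      rw [cobd_mul, ih]
      simp [cupW]
    rw [this, cobd_cobd]

lemma cupD_cupW (f : (ι → ℤ) → ZMod 2) (a : ι → (ι → ℤ) → ZMod 2) (l : List ι)
    (x : ι → ℤ) (J : Finset ι) :
    cupD f (cupW a l) x J = cobd (fun x J => f x * cupW a l x J) x J := by
  rw [cobd_mul, cobd_cupW]; simp

lemma cupW_bound (a : ι → (ι → ℤ) → ZMod 2) (k : ℤ)
    (h0 : ∀ i x, x i ≤ 0 → a i x = 0) (h1 : ∀ i x, k ≤ x i → a i x = 1)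
    (l : List ι) (x : ι → ℤ) (J : Finset ι) (j : ι) (hj : j ∈ l)
    (hx : x j + l.length ≤ 0 ∨ k ≤ x j) : cupW a l x J = 0 := by
  induction l generalizing x J with
  | nil => simp at hj
  | cons i l ih =>
    simp only [cupW, cupD]
    refine Finset.sum_eq_zero fun s _ => ?_
    have hs : (0:ℤ) ≤ (Pi.single s 1 : ι → ℤ) j ∧ (Pi.single s 1 : ι → ℤ) j ≤ 1 := by
      by_cases h : j = s
      · subst h; simp
      · simp [h]
    simp only [List.length_cons, Nat.cast_add, Nat.cast_one] at hx
    by_cases hij : j = i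
    · subst hij
      rcases hx with hx | hx
      · rw [h0 j x (by omega), h0 j _ (by simp only [Pi.add_apply]; omega)]; simp
      · rw [h1 j x (by omega), h1 j _ (by simp only [Pi.add_apply]; omega), zmod2_add_self]; simp
    · rw [ih (x + Pi.single s 1) (J.erase s) (by simpa [hij] using hj)
        (by simp only [Pi.add_apply]; omega)]
      simp

/-- the slice where coordinates outside `J` equal `1` -/
def slice (J : Finset ι) : Set (ι → ℤ) := {x | ∀ j, j ∉ J → x j = 1}

lemma slice_shift {J : Finset ι} {j : ι} (hj : j ∈ J) (x : ι → ℤ) :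
    x + Pi.single j 1 ∈ slice J ↔ x ∈ slice J := by
  unfold slice
  refine forall_congr' fun s => imp_congr_right fun hs => ?_
  have : s ≠ j := fun h => hs (h ▸ hj)
  simp [this]

lemma finsum_shift {ι : Type*} (g : (ι → ℤ) → ZMod 2) (e : ι → ℤ) :
    ∑ᶠ x, g (x + e) = ∑ᶠ x, g x :=
  finsum_comp_equiv (Equiv.addRight e)

/-- Stokes -/
lemma stokes [Finite ι] (J : Finset ι) (ω : (ι → ℤ) → Finset ι → ZMod 2) (m k : ℤ)
    (hω : ∀ x ∈ slice J, ∀ K, (∃ j ∈ J, x j ≤ m ∨ k ≤ x j) → ω x K = 0) :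
    ∑ᶠ x, (slice J).indicator (fun x => cobd ω x J) x = 0 := by
  classical
  have hfin : ∀ K, (Function.support ((slice J).indicator (fun x => ω x K))).Finite := by
    intro K
    refine (Set.Finite.pi' (fun i : ι => Set.finite_Icc (min m 1) (max k 1))).subset ?_
    intro x hx i
    rw [Function.mem_support, Set.indicator_apply_ne_zero] at hx
    obtain ⟨hx1, hx2⟩ := hx
    by_cases hi : i ∈ J
    · have : ¬ (x i ≤ m ∨ k ≤ x i) := fun h => hx2 (hω x hx1 K ⟨i, hi, h⟩)
      simp only [Set.mem_Icc]; omega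
    · have := hx1 i hi
      simp only [Set.mem_Icc]; omega
  have e1 : ∀ x, (slice J).indicator (fun x => cobd ω x J) x =
      ∑ j ∈ J, ((slice J).indicator (fun x => ω x (J.erase j)) (x + Pi.single j 1)
        + (slice J).indicator (fun x => ω x (J.erase j)) x) := by
    intro x
    by_cases hx : x ∈ slice J
    · rw [Set.indicator_of_mem hx]
      refine Finset.sum_congr rfl fun j hj => ?_
      rw [Set.indicator_of_mem hx, Set.indicator_of_mem ((slice_shift hj x).2 hx)]
    · rw [Set.indicator_of_notMem hx]
      refine (Finset.sum_eq_zero fun j hj => ?_).symm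
      rw [Set.indicator_of_notMem hx, Set.indicator_of_notMem (fun h => hx ((slice_shift hj x).1 h))]
      simp
  have hfin2 : ∀ j, (Function.support fun x : ι → ℤ => (slice J).indicator (fun x => ω x (J.erase j))
      (x + Pi.single j (1 : ℤ) : ι → ℤ)).Finite := by
    intro j
    exact (hfin (J.erase j)).preimage (f := fun x : ι → ℤ => x + Pi.single j (1 : ℤ))
      (add_left_injective _).injOn
  rw [finsum_congr e1, finsum_sum_comm]
  · refine Finset.sum_eq_zero fun j hj => ?_
    rw [finsum_add_distrib (hfin2 j) (hfin _),
      finsum_shift (fun x => (slice J).indicator (fun x => ω x (J.erase j)) x), zmod2_add_self]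
  · intro j hj
    exact ((hfin2 j).union (hfin _)).subset (Function.support_add _ _)

lemma sum_cupW [Finite ι] (a : ι → (ι → ℤ) → ZMod 2) (k : ℤ) (hk : 1 ≤ k)
    (h0 : ∀ i x, x i ≤ 0 → a i x = 0) (h1 : ∀ i x, k ≤ x i → a i x = 1)
    (l : List ι) (hl : l.Nodup) :
    ∑ᶠ x, (slice l.toFinset).indicator (fun x => cupW a l x l.toFinset) x = 1 := by
  classical
  induction l with
  | nil =>
    rw [finsum_eq_single _ (fun _ => 1)]
    · simp [slice, cupW]
    · intro x hx
      apply Set.indicator_of_notMem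
      intro h
      apply hx
      funext i
      exact h i (by simp)
  | cons i l ih =>
    rw [List.nodup_cons] at hl
    specialize ih hl.2
    have hil : i ∉ l.toFinset := by simpa using hl.1
    set J := (i :: l).toFinset with hJ
    have hJ' : J = insert i l.toFinset := by simp [hJ]
    have hiJ : i ∈ J := by simp [hJ']
    have hJe : J.erase i = l.toFinset := by rw [hJ', Finset.erase_insert hil]
    let c : (ι → ℤ) → ZMod 2 := fun x => if 1 ≤ x i then 1 else 0
    let b : (ι → ℤ) → ZMod 2 := fun x => a i x + c x
    have hb : ∀ x, (x i ≤ 0 ∨ k ≤ x i) → b x = 0 := by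
      rintro x (hx | hx)
      · simp [b, c, h0 i x hx]; omega
      · have : 1 ≤ x i := by omega
        simp only [b, c, h1 i x hx, this, if_true]; exact zmod2_add_self _
    have hS : ∑ᶠ x, (slice J).indicator (fun x => cupD b (cupW a l) x J) x = 0 := by
      simp only [cupD_cupW]
      apply stokes J _ (-(l.length : ℤ)) k
      rintro x hx K ⟨j, hj, hxj⟩
      by_cases hji : j = i
      · subst hji
        rw [hb x (by omega)]; simp
      · have : j ∈ l := by simpa [hJ, hji] using hj
        rw [cupW_bound a k h0 h1 l x K j this (by omega)]; simp
    have hc : ∀ x, (slice J).indicator (fun x => cupD c (cupW a l) x J) x =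
        (slice l.toFinset).indicator (fun x => cupW a l x l.toFinset) (x + Pi.single i 1) := by
      intro x
      have hxx : x + Pi.single i 1 ∈ slice l.toFinset ↔ x ∈ slice J ∧ x i = 0 := by
        constructor
        · intro h
          refine ⟨(slice_shift hiJ x).1 fun j hj => h j (fun h' => hj (by rw [hJ']; exact Finset.mem_insert_of_mem h')), ?_⟩
          have := h i hil
          simpa using this
        · rintro ⟨h, h'⟩ j hj
          by_cases hji : j = i
          · subst hji; simp [h']
          · have := h j (by simp only [hJ', Finset.mem_insert, not_or]; exact ⟨hji, hj⟩)
            simp [hji, this]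
      have key : cupD c (cupW a l) x J = if x i = 0 then cupW a l (x + Pi.single i 1) l.toFinset else 0 := by
        unfold cupD
        rw [Finset.sum_eq_single i]
        · rw [hJe]
          have : c (x + Pi.single i 1) + c x = if x i = 0 then 1 else 0 := by
            simp only [c, Pi.add_apply, Pi.single_eq_same]
            by_cases h1 : x i = 0
            · simp [h1]
            · by_cases h2 : 1 ≤ x i
              · have h3 : 1 ≤ x i + 1 := by omega
                simp only [h1, h2, h3, if_true, if_false]; exact zmod2_add_self _
              · have h3 : ¬ 1 ≤ x i + 1 := by omega
                simp only [h1, h2, h3, if_false]; simp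
          rw [this]; split_ifs <;> simp
        · intro j _ hj
          have : c (x + Pi.single j 1) = c x := by simp [c, hj.symm]
          rw [this, zmod2_add_self, zero_mul]
        · intro h; exact absurd hiJ h
      by_cases h1 : x ∈ slice J
      · by_cases h2 : x i = 0
        · rw [Set.indicator_of_mem h1, Set.indicator_of_mem (hxx.2 ⟨h1, h2⟩), key, if_pos h2]
        · rw [Set.indicator_of_mem h1, Set.indicator_of_notMem (fun h => h2 (hxx.1 h).2), key,
            if_neg h2]
      · rw [Set.indicator_of_notMem h1, Set.indicator_of_notMem (fun h => h1 (hxx.1 h).1)]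
    have hC : ∑ᶠ x, (slice J).indicator (fun x => cupD c (cupW a l) x J) x = 1 := by
      rw [finsum_congr hc, finsum_shift (fun x =>
        (slice l.toFinset).indicator (fun x => cupW a l x l.toFinset) x), ih]
    -- finite supports
    have hfin : ∀ f : (ι → ℤ) → ZMod 2, (∀ x, (x i + 1 ≤ 0 ∨ k ≤ x i) →
        ∀ j, f (x + Pi.single j 1) + f x = 0) → (Function.support
        ((slice J).indicator (fun x => cupD f (cupW a l) x J))).Finite := by
      intro f hf
      refine (Set.Finite.pi' (fun i : ι => Set.finite_Icc (-(l.length : ℤ) - 1) (max k 1))).subset ?_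
      intro x hx s
      rw [Function.mem_support, Set.indicator_apply_ne_zero] at hx
      obtain ⟨hx1, hx2⟩ := hx
      by_cases hs : s ∈ J
      · by_contra hcon
        simp only [Set.mem_Icc] at hcon
        apply hx2
        refine Finset.sum_eq_zero fun j _ => ?_
        by_cases hsi : s = i
        · subst hsi
          rw [hf x (by omega) j, zero_mul]
        · have : s ∈ l := by simpa [hJ, hsi] using hs
          have hs' : (0:ℤ) ≤ (Pi.single j 1 : ι → ℤ) s ∧ (Pi.single j 1 : ι → ℤ) s ≤ 1 := by
            by_cases h : s = j
            · subst h; simp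
            · simp [h]
          rw [cupW_bound a k h0 h1 l _ _ s this (by simp only [Pi.add_apply]; omega)]; simp
      · have := hx1 s hs
        simp only [Set.mem_Icc]; omega
    have hsg : ∀ j, (0:ℤ) ≤ (Pi.single j 1 : ι → ℤ) i ∧ (Pi.single j 1 : ι → ℤ) i ≤ 1 := by
      intro j
      by_cases h : i = j
      · subst h; simp
      · simp [h]
    have hfb := hfin b (by
      intro x hx j
      have := hsg j
      rw [hb _ (by simp only [Pi.add_apply]; omega), hb x (by omega)]; simp)
    have hfc := hfin c (by
      intro x hx j
      have := hsg j
      have : c (x + Pi.single j 1) = c x := by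
        simp only [c, Pi.add_apply]
        congr 1
        apply propext; omega
      rw [this, zmod2_add_self])
    have hsum : ∀ x, (slice J).indicator (fun x => cupW a (i :: l) x J) x =
        (slice J).indicator (fun x => cupD b (cupW a l) x J) x +
        (slice J).indicator (fun x => cupD c (cupW a l) x J) x := by
      intro x
      by_cases hx : x ∈ slice J
      · simp only [Set.indicator_of_mem hx, cupW, cupD, ← Finset.sum_add_distrib, ← add_mul]
        refine Finset.sum_congr rfl fun j _ => ?_
        congr 1
        have e1 := zmod2_add_self (c (x + Pi.single j 1))
        have e2 := zmod2_add_self (c x)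
        simp only [b]
        linear_combination -e1 - e2
      · simp [Set.indicator_of_notMem hx]
    rw [finsum_congr hsum, finsum_add_distrib hfb hfc, hS, hC, zero_add]

lemma cupW_path (a : ι → (ι → ℤ) → ZMod 2) (l : List ι) (x : ι → ℤ) (J : Finset ι)
    (h : cupW a l x J ≠ 0) : ∀ i ∈ l, ∃ y z : ι → ℤ,
      (∀ j, x j ≤ y j ∧ y j ≤ x j + if j ∈ J then 1 else 0) ∧
      (∀ j, x j ≤ z j ∧ z j ≤ x j + if j ∈ J then 1 else 0) ∧ a i y ≠ a i z := by
  induction l generalizing x J with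
  | nil => simp
  | cons i l ih =>
    simp only [cupW, cupD] at h
    obtain ⟨s, hs, hne⟩ := Finset.exists_ne_zero_of_sum_ne_zero h
    have hcell : ∀ y : ι → ℤ, (∀ j, (x + Pi.single s 1 : ι → ℤ) j ≤ y j ∧
        y j ≤ (x + Pi.single s 1 : ι → ℤ) j + if j ∈ J.erase s then 1 else 0) →
        (∀ j, x j ≤ y j ∧ y j ≤ x j + if j ∈ J then 1 else 0) := by
      intro y hy j
      have := hy j
      by_cases hjs : j = s
      · subst hjs; simp [hs] at this ⊢; omega
      · simpa [hjs] using this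
    intro i' hi'
    rcases List.mem_cons.1 hi' with rfl | hi'
    · refine ⟨x + Pi.single s 1, x, hcell _ fun j => ?_, fun j => ?_, ?_⟩
      · split_ifs <;> simp
      · split_ifs <;> simp
      · intro he
        apply hne
        rw [he, zmod2_add_self, zero_mul]
    · obtain ⟨y, z, hy, hz, hyz⟩ := ih _ _ (right_ne_zero_of_mul hne) i' hi'
      exact ⟨y, z, hcell y hy, hcell z hz, hyz⟩

theorem comb_main [Fintype ι] (a : ι → (ι → ℤ) → ZMod 2) (k : ℤ) (hk : 1 ≤ k)
    (h0 : ∀ i x, x i ≤ 0 → a i x = 0) (h1 : ∀ i x, k ≤ x i → a i x = 1) :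
    ∃ x : ι → ℤ, ∀ i, ∃ y z : ι → ℤ, (∀ j, x j ≤ y j ∧ y j ≤ x j + 1) ∧
      (∀ j, x j ≤ z j ∧ z j ≤ x j + 1) ∧ a i y ≠ a i z := by
  have h := sum_cupW a k hk h0 h1 Finset.univ.toList (Finset.nodup_toList _)
  simp only [Finset.toList_toFinset] at h
  obtain ⟨x, hx⟩ : ∃ x, (slice Finset.univ).indicator
      (fun x => cupW a Finset.univ.toList x Finset.univ) x ≠ 0 := by
    by_contra! hcon
    rw [finsum_congr hcon, finsum_zero] at h
    exact zero_ne_one h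
  rw [Set.indicator_apply_ne_zero] at hx
  refine ⟨x, fun i => ?_⟩
  simpa using cupW_path a _ x _ hx.2 i (by simp)
end Comb

theorem cube_essential (n : ℕ) (U V : Fin n → Set (Fin n → Icc (-1 : ℝ) 1))
    (hU : ∀ i, IsOpen (U i)) (hV : ∀ i, IsOpen (V i)) (hUV : ∀ i, Disjoint (U i) (V i))
    (hn : ∀ i x, (x i : ℝ) = -1 → x ∈ U i) (hp : ∀ i x, (x i : ℝ) = 1 → x ∈ V i) :
    ∃ x, ∀ i, x ∉ U i ∧ x ∉ V i := by
  classical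
  by_contra! hcon
  let c : Fin n ⊕ Fin n → Set (Fin n → Icc (-1 : ℝ) 1) := Sum.elim U V
  have hcov : (univ : Set (Fin n → Icc (-1 : ℝ) 1)) ⊆ ⋃ s, c s := by
    intro x _
    obtain ⟨i, hi⟩ := hcon x
    by_cases h : x ∈ U i
    · exact mem_iUnion.2 ⟨Sum.inl i, h⟩
    · exact mem_iUnion.2 ⟨Sum.inr i, hi h⟩
  obtain ⟨δ, hδ, hleb⟩ := lebesgue_number_lemma_of_metric isCompact_univ
    (by rintro (i | i); exacts [hU i, hV i]) hcov
  obtain ⟨k, hk⟩ := exists_nat_gt (max 1 (2 / δ))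
  have hk1 : (1 : ℝ) < k := lt_of_le_of_lt (le_max_left _ _) hk
  have hk0 : (0 : ℝ) < k := by linarith
  have hk2 : 2 / (k : ℝ) < δ := by
    have := lt_of_le_of_lt (le_max_right _ _) hk
    rw [div_lt_iff₀ hδ] at this
    rw [div_lt_iff₀ hk0]; linarith
  let p : (Fin n → ℤ) → (Fin n → Icc (-1 : ℝ) 1) := fun y i =>
    projIcc (-1 : ℝ) 1 (by norm_num) (2 * (y i : ℝ) / k - 1)
  let a : Fin n → (Fin n → ℤ) → ZMod 2 := fun i y => if p y ∈ U i then 0 else 1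
  obtain ⟨x, hx⟩ := comb_main a k (by exact_mod_cast hk1.le)
    (by
      intro i y hy
      have : p y ∈ U i := by
        apply hn
        have hy' : (y i : ℝ) ≤ 0 := by exact_mod_cast hy
        have : 2 * (y i : ℝ) / k ≤ 0 := div_nonpos_of_nonpos_of_nonneg (by linarith) hk0.le
        simp only [p]
        rw [projIcc_of_le_left _ (by linarith)]
      simp [a, this])
    (by
      intro i y hy
      have : p y ∈ V i := by
        apply hp
        have hy' : (k : ℝ) ≤ (y i : ℝ) := by exact_mod_cast hy
        have : 2 ≤ 2 * (y i : ℝ) / k := by rw [le_div_iff₀ hk0]; linarith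
        simp only [p]
        rw [projIcc_of_right_le _ (by linarith)]
      simp [a, (hUV i).notMem_of_mem_right this])
  have hball : ∀ y : Fin n → ℤ, (∀ j, x j ≤ y j ∧ y j ≤ x j + 1) → p y ∈ Metric.ball (p x) δ := by
    intro y hy
    rw [Metric.mem_ball, dist_pi_lt_iff hδ]
    intro j
    refine lt_of_le_of_lt ?_ hk2
    refine ((LipschitzWith.projIcc (by norm_num : (-1 : ℝ) ≤ 1)).dist_le_mul _ _).trans ?_
    have h1 : (x j : ℝ) ≤ y j := by exact_mod_cast (hy j).1
    have h2 : (y j : ℝ) ≤ x j + 1 := by exact_mod_cast (hy j).2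
    rw [Real.dist_eq]
    have e : 2 * (y j : ℝ) / k - 1 - (2 * (x j : ℝ) / k - 1) = 2 * (y j - x j) / k := by ring
    rw [e, abs_of_nonneg (div_nonneg (by linarith) hk0.le)]
    simp only [NNReal.coe_one, one_mul]
    gcongr
    linarith
  obtain ⟨s, hs⟩ := hleb (p x) (mem_univ _)
  rcases s with i | i
  all_goals
    obtain ⟨y, z, hy, hz, hyz⟩ := hx i
    have h1 := hs (hball y hy)
    have h2 := hs (hball z hz)
    simp only [c, Sum.elim_inl, Sum.elim_inr] at h1 h2
    apply hyz
  · simp [a, h1, h2]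
  · simp [a, (hUV i).notMem_of_mem_right h1, (hUV i).notMem_of_mem_right h2]

theorem hilbert_essential (U V : ℕ → Set HilbertCube)
    (hU : ∀ i, IsOpen (U i)) (hV : ∀ i, IsOpen (V i)) (hUV : ∀ i, Disjoint (U i) (V i))
    (hn : ∀ i x, (x i : ℝ) = -1 → x ∈ U i) (hp : ∀ i x, (x i : ℝ) = 1 → x ∈ V i) :
    ∃ x, ∀ i, x ∉ U i ∧ x ∉ V i := by
  by_contra! hcon
  obtain ⟨t, ht⟩ := isCompact_univ.elim_finite_subcover (fun i => U i ∪ V i)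
    (fun i => (hU i).union (hV i)) (by
      intro x _
      obtain ⟨i, hi⟩ := hcon x
      refine mem_iUnion.2 ⟨i, ?_⟩
      by_cases h : x ∈ U i
      · exact Or.inl h
      · exact Or.inr (hi h))
  obtain ⟨n, hnt⟩ : ∃ n, ∀ i ∈ t, i < n := ⟨t.sup id + 1, fun i hi =>
    Nat.lt_succ_of_le (Finset.le_sup (f := id) hi)⟩
  let g : (Fin n → Icc (-1 : ℝ) 1) → HilbertCube := fun y i =>
    if h : i < n then y ⟨i, h⟩ else ⟨0, by norm_num⟩
  have hg : Continuous g := by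
    refine continuous_pi fun i => ?_
    by_cases h : i < n
    · simp only [g, h, dif_pos]; exact continuous_apply _
    · simp only [g, h, dif_neg, not_false_iff]; exact continuous_const
  have hgi : ∀ (i : Fin n) y, g y i = y i := by
    intro i y; simp [g]
  obtain ⟨y, hy⟩ := cube_essential n (fun i => g ⁻¹' U i) (fun i => g ⁻¹' V i)
    (fun i => (hU i).preimage hg) (fun i => (hV i).preimage hg)
    (fun i => (hUV i).preimage g) (fun i y h => hn i _ (by rw [hgi, h]))
    (fun i y h => hp i _ (by rw [hgi, h]))
  have := ht (mem_univ (g y))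
  simp only [mem_iUnion] at this
  obtain ⟨i, hi, h⟩ := this
  have hy' := hy ⟨i, hnt i hi⟩
  rcases h with h | h
  · exact hy'.1 h
  · exact hy'.2 h

lemma open_depends (U : Set HilbertCube) (hU : IsOpen U) (u : HilbertCube) (hu : u ∈ U) :
    ∃ N : ℕ, ∀ x : HilbertCube, (∀ i < N, x i = u i) → x ∈ U := by
  obtain ⟨I, w, h1, h2⟩ := isOpen_pi_iff.1 hU u hu
  refine ⟨I.sup id + 1, fun x hx => h2 fun i hi => ?_⟩
  rw [hx i (Nat.lt_succ_of_le (Finset.le_sup (f := id) hi))]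
  exact (h1 i hi).2

lemma extend_sep {X : Type*} [TopologicalSpace X] [CompletelyNormalSpace X] (S A B : Set X)
    (hA : IsClosed A) (hB : IsClosed B) (A' B' : Set X) (hA' : A' ⊆ interior A)
    (hB' : B' ⊆ interior B) (hAB : Disjoint A B)
    (U V : Set S) (hU : IsOpen U) (hV : IsOpen V) (hUV : Disjoint U V)
    (hAU : Subtype.val ⁻¹' A ⊆ U) (hBV : Subtype.val ⁻¹' B ⊆ V) :
    ∃ U' V' : Set X, IsOpen U' ∧ IsOpen V' ∧ Disjoint U' V' ∧ A' ⊆ U' ∧ B' ⊆ V' ∧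
      Subtype.val '' U ⊆ U' ∧ Subtype.val '' V ⊆ V' := by
  have key : ∀ (A B A' B' : Set X) (hA : IsClosed A) (hB : IsClosed B) (hA' : A' ⊆ interior A)
    (hB' : B' ⊆ interior B) (hAB : Disjoint A B)
    (U V : Set S) (hU : IsOpen U) (hV : IsOpen V) (hUV : Disjoint U V)
    (hAU : Subtype.val ⁻¹' A ⊆ U) (hBV : Subtype.val ⁻¹' B ⊆ V),
    Disjoint (closure (A' ∪ Subtype.val '' U)) (B' ∪ Subtype.val '' V) := by
    clear hA hB hA' hB' hAB hU hV hUV hAU hBV A B A' B' U V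
    intro A B A' B' hA hB hA' hB' hAB U V hU hV hUV hAU hBV
    rw [closure_union, disjoint_union_left]
    have hA'A : closure A' ⊆ A := closure_minimal (hA'.trans interior_subset) hA
    constructor
    · rw [disjoint_union_right]
      refine ⟨hAB.mono hA'A (hB'.trans interior_subset), ?_⟩
      rw [Set.disjoint_left]
      rintro x hx ⟨v, hv, rfl⟩
      exact Set.disjoint_left.1 hUV (hAU (hA'A hx)) hv
    · rw [disjoint_union_right]
      constructor
      · have : Disjoint (Subtype.val '' U) (interior B) := by
          rw [Set.disjoint_left]
          rintro _ ⟨u, hu, rfl⟩ hx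
          exact Set.disjoint_left.1 hUV hu (hBV (show (u : X) ∈ B from interior_subset hx))
        exact (this.closure_left isOpen_interior).mono_right hB'
      · obtain ⟨O, hO, rfl⟩ := isOpen_induced_iff.1 hV
        have : Disjoint (Subtype.val '' U) O := by
          rw [Set.disjoint_left]
          rintro _ ⟨u, hu, rfl⟩ hx
          exact Set.disjoint_left.1 hUV hu hx
        refine (this.closure_left hO).mono_right ?_
        rintro _ ⟨v, hv, rfl⟩
        exact hv
  have h1 := key A B A' B' hA hB hA' hB' hAB U V hU hV hUV hAU hBV
  have h2 := (key B A B' A' hB hA hB' hA' hAB.symm V U hV hU hUV.symm hBV hAU).symm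
  obtain ⟨U', V', hU', hV', hs, ht, hd⟩ := separatedNhds_iff_disjoint.2 (completely_normal h1 h2)
  exact ⟨U', V', hU', hV', hd, subset_union_left.trans hs, subset_union_left.trans ht,
    subset_union_right.trans hs, subset_union_right.trans ht⟩

instance : CompletelyNormalSpace HilbertCube := by
  let _ := TopologicalSpace.metrizableSpaceMetric HilbertCube
  infer_instance

theorem strongly_of_sep (S U V : Set HilbertCube) (hU : IsOpen U) (hV : IsOpen V)
    (hUV : Disjoint U V) (hUn : U.Nonempty) (hVn : V.Nonempty) (hS : (U ∪ V)ᶜ ⊆ S) :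
    StronglyInfiniteDimensional S := by
  obtain ⟨u, hu⟩ := hUn
  obtain ⟨v, hv⟩ := hVn
  obtain ⟨N1, hN1⟩ := open_depends U hU u hu
  obtain ⟨N2, hN2⟩ := open_depends V hV v hv
  let N := max N1 N2
  let A : ℕ → Set HilbertCube := fun i => {x | (x (N + i) : ℝ) ≤ -1/2}
  let B : ℕ → Set HilbertCube := fun i => {x | (1/2 : ℝ) ≤ (x (N + i) : ℝ)}
  have hcont : ∀ i, Continuous fun x : HilbertCube => (x i : ℝ) := fun i => by fun_prop
  have hA : ∀ i, IsClosed (A i) := fun i => isClosed_le (hcont _) continuous_const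
  have hB : ∀ i, IsClosed (B i) := fun i => isClosed_le continuous_const (hcont _)
  have hAB : ∀ i, Disjoint (A i) (B i) := by
    intro i
    rw [Set.disjoint_left]
    intro x hx hx'
    simp only [A, B, mem_ofPred_eq] at hx hx'
    linarith
  refine ⟨fun i => Subtype.val ⁻¹' A i, fun i => Subtype.val ⁻¹' B i, fun i =>
    ⟨(hA i).preimage continuous_subtype_val, (hB i).preimage continuous_subtype_val,
      (hAB i).preimage _⟩, ?_⟩
  intro L hL
  have hA' : ∀ i, negFace (N + i) ⊆ interior (A i) := by
    intro i x hx
    have ho : IsOpen {x : HilbertCube | (x (N + i) : ℝ) < -1/2} :=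
      isOpen_lt (hcont _) continuous_const
    refine (interior_maximal ?_ ho) ?_
    · intro y hy
      simp only [A, B, mem_ofPred_eq] at hy ⊢
      exact le_of_lt hy
    · have : (x (N + i) : ℝ) = -1 := hx
      simp only [mem_ofPred_eq, this]; norm_num
  have hB' : ∀ i, posFace (N + i) ⊆ interior (B i) := by
    intro i x hx
    have ho : IsOpen {x : HilbertCube | (1/2 : ℝ) < (x (N + i) : ℝ)} :=
      isOpen_lt continuous_const (hcont _)
    refine (interior_maximal ?_ ho) ?_
    · intro y hy
      simp only [A, B, mem_ofPred_eq] at hy ⊢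
      exact le_of_lt hy
    · have : (x (N + i) : ℝ) = 1 := hx
      simp only [mem_ofPred_eq, this]; norm_num
  have hext : ∀ i, ∃ U' V' : Set HilbertCube, IsOpen U' ∧ IsOpen V' ∧ Disjoint U' V' ∧
      negFace (N + i) ⊆ U' ∧ posFace (N + i) ⊆ V' ∧
      ∀ s : S, (s : HilbertCube) ∉ U' → (s : HilbertCube) ∉ V' → s ∈ L i := by
    intro i
    obtain ⟨-, P, R, hP, hR, hPR, hAP, hBR, hLc⟩ := hL i
    obtain ⟨U', V', h1, h2, h3, h4, h5, h6, h7⟩ := extend_sep S (A i) (B i) (hA i) (hB i) _ _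
      (hA' i) (hB' i) (hAB i) P R hP hR hPR hAP hBR
    refine ⟨U', V', h1, h2, h3, h4, h5, fun s hs1 hs2 => ?_⟩
    by_contra hs
    have : s ∈ P ∪ R := hLc ▸ hs
    rcases this with h | h
    · exact hs1 (h6 ⟨s, h, rfl⟩)
    · exact hs2 (h7 ⟨s, h, rfl⟩)
  choose U' V' h1 h2 h3 h4 h5 h6 using hext
  let φ : HilbertCube → HilbertCube := fun z i =>
    if i < N then projIcc (-1 : ℝ) 1 (by norm_num)
      ((1 - (z 0 : ℝ)) / 2 * (u i : ℝ) + (1 + (z 0 : ℝ)) / 2 * (v i : ℝ))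
    else z (i - N + 1)
  have hφ : Continuous φ := by
    refine continuous_pi fun i => ?_
    by_cases h : i < N
    · simp only [φ, h, if_true]
      refine continuous_projIcc.comp ?_
      have := hcont 0
      fun_prop
    · simp only [φ, h, if_false]; exact continuous_apply _
  have hφN : ∀ z i, φ z (N + i) = z (i + 1) := by
    intro z i
    simp [φ]
  obtain ⟨z, hz⟩ := hilbert_essential
    (fun i => φ ⁻¹' (Nat.casesOn i U U')) (fun i => φ ⁻¹' (Nat.casesOn i V V'))
    (by rintro (_ | i); exacts [hU.preimage hφ, (h1 i).preimage hφ])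
    (by rintro (_ | i); exacts [hV.preimage hφ, (h2 i).preimage hφ])
    (by rintro (_ | i); exacts [hUV.preimage φ, (h3 i).preimage φ])
    (by
      rintro (_ | i) x hx
      · refine hN1 _ fun i hi => ?_
        have : i < N := lt_of_lt_of_le hi (le_max_left _ _)
        simp only [φ, this, if_true, hx]
        norm_num
      · refine h4 i ?_
        change (φ x (N + i) : ℝ) = -1
        rw [hφN, hx])
    (by
      rintro (_ | i) x hx
      · refine hN2 _ fun i hi => ?_
        have : i < N := lt_of_lt_of_le hi (le_max_right _ _)
        simp only [φ, this, if_true, hx]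
        norm_num
      · refine h5 i ?_
        change (φ x (N + i) : ℝ) = 1
        rw [hφN, hx])
  have hzS : φ z ∈ S := hS (by
    rintro (h | h)
    · exact (hz 0).1 h
    · exact (hz 0).2 h)
  exact ⟨⟨φ z, hzS⟩, mem_iInter.2 fun i => h6 i _ (hz (i + 1)).1 (hz (i + 1)).2⟩

/-- The Hilbert cube cannot be separated by a weakly infinite dimensional
subset: if `S ⊆ Q` is weakly infinite dimensional then `Q \ S` is connected. -/
theorem isConnected_compl_of_weaklyInfiniteDimensional
    (S : Set HilbertCube) (hS : ¬ StronglyInfiniteDimensional S) :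
    IsConnected (Sᶜ : Set HilbertCube) := by
  constructor
  · by_contra hne
    rw [not_nonempty_iff_eq_empty, compl_empty_iff] at hne
    apply hS
    have hcont : Continuous fun x : HilbertCube => (x 0 : ℝ) := by fun_prop
    refine strongly_of_sep S {x | (x 0 : ℝ) < 0} {x | 0 < (x 0 : ℝ)}
      (isOpen_lt hcont continuous_const) (isOpen_lt continuous_const hcont) ?_
      ⟨fun _ => ⟨-1, by norm_num⟩, by simp⟩ ⟨fun _ => ⟨1, by norm_num⟩, by simp⟩
      (by rw [hne]; exact subset_univ _)
    rw [Set.disjoint_left]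
    intro x hx hx'
    simp only [mem_ofPred_eq] at hx hx'
    exact lt_asymm hx hx'
  · intro P R hP hR hcov hPn hRn
    by_contra hcon
    rw [not_nonempty_iff_eq_empty] at hcon
    apply hS
    have key : ∀ P R : Set HilbertCube, IsOpen R → Sᶜ ∩ (P ∩ R) = ∅ →
        Disjoint (closure (Sᶜ ∩ P)) (Sᶜ ∩ R) := by
      intro P R hR hcon
      have : Disjoint (Sᶜ ∩ P) R := by
        rw [Set.disjoint_left]
        intro x hx hx'
        have : x ∈ Sᶜ ∩ (P ∩ R) := ⟨hx.1, hx.2, hx'⟩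
        rw [hcon] at this
        exact this
      exact (this.closure_left hR).mono_right inter_subset_right
    obtain ⟨U, V, hU, hV, hs, ht, hd⟩ := separatedNhds_iff_disjoint.2
      (completely_normal (key P R hR hcon) (key R P hP (by rwa [inter_comm R P])).symm)
    refine strongly_of_sep S U V hU hV hd (hPn.mono hs) (hRn.mono ht) ?_
    intro x hx
    by_contra hxS
    apply hx
    rcases hcov hxS with h | h
    · exact Or.inl (hs ⟨hxS, h⟩)
    · exact Or.inr (ht ⟨hxS, h⟩)
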